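/- arXiv:2106.15676 — 2 statements merged into one kernel-verified Lean document; each statement's English description precedes it below -/
import Mathlib

section
/- Let d ≥ 2, κ ≥ 1, let Σ̂_κ := {1,…,κ}^ℤ with the product topology and left shift σ, and let A : Σ̂_κ → SL(d,ℝ) be continuous. Write A⁽ⁿ⁾(ω) := A(σ^{n−1}(ω)) ⋯ A(σ(ω)) A(ω), and consider the skew product P_A : Σ̂_κ × S^{d−1} → Σ̂_κ × S^{d−1}, P_A(ω,v) = (σ(ω), A(ω)v/‖A(ω)v‖), on the unit sphere S^{d−1} ⊂ ℝ^d (the double cover of the projective space), together with the continuous observable φ_A(ω,v) := log ‖A(ω)v‖. Let ν be a σ-invariant ergodic Borel probability measure on Σ̂_κ, and suppose (1/n) ∫ log ‖A⁽ⁿ⁾(ω)‖ dν(ω) → λ as n → ∞, where ‖·‖ denotes the operator norm (so λ = λ₊(A,ν) is the top Lyapunov exponent of A with respect to ν). Then there exists a P_A-invariant ergodic Borel probability measure μ on Σ̂_κ × S^{d−1} such that the pushforward of μ under the first-coordinate projection equals ν and ∫ φ_A dμ = λ. -/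
open Filter Topology Metric MeasureTheory

noncomputable section

/-- The action of a `d × d` real matrix on Euclidean space `ℝ^d`. -/
def mvec {d : ℕ} (B : Matrix (Fin d) (Fin d) ℝ) (v : EuclideanSpace ℝ (Fin d)) :
    EuclideanSpace ℝ (Fin d) :=
  Matrix.toEuclideanLin B v

lemma mvec_ne_zero {d : ℕ} (B : Matrix.SpecialLinearGroup (Fin d) ℝ)
    {v : EuclideanSpace ℝ (Fin d)} (hv : v ≠ 0) :
    mvec (B : Matrix (Fin d) (Fin d) ℝ) v ≠ 0 := by
  intro h
  apply hv
  have hinj : Function.Injective ((B : Matrix (Fin d) (Fin d) ℝ)).mulVec := by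
    refine Matrix.mulVec_injective_iff_isUnit.2 ?_
    rw [Matrix.isUnit_iff_isUnit_det, Matrix.SpecialLinearGroup.det_coe]
    exact isUnit_one
  have h' : (B : Matrix (Fin d) (Fin d) ℝ).mulVec
      ((WithLp.equiv 2 (Fin d → ℝ)) v) = 0 := by
    have := congrArg (WithLp.equiv 2 (Fin d → ℝ)) h
    rw [mvec, Matrix.toEuclideanLin_apply] at this
    simpa using this
  have hv0 : (WithLp.equiv 2 (Fin d → ℝ)) v = 0 := by
    apply hinj
    rw [h', Matrix.mulVec_zero]
  have := congrArg (WithLp.equiv 2 (Fin d → ℝ)).symm hv0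
  simpa using this

/-- The left shift on the two-sided sequence space `Σ̂_κ = {1,…,κ}^ℤ`. -/
def shiftZ {κ : ℕ} (ω : ℤ → Fin κ) : ℤ → Fin κ := fun n => ω (n + 1)

/-- The cocycle product `A⁽ⁿ⁾(ω) = A(σ^{n-1}(ω)) ⋯ A(σ(ω)) A(ω)`. -/
def cocycleProdZ {d κ : ℕ} (A : (ℤ → Fin κ) → Matrix.SpecialLinearGroup (Fin d) ℝ)
    (ω : ℤ → Fin κ) : ℕ → Matrix.SpecialLinearGroup (Fin d) ℝ
  | 0 => 1
  | n + 1 => A (shiftZ^[n] ω) * cocycleProdZ A ω n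

/-- The unit sphere `S^{d-1} ⊆ ℝ^d` (as a type), a double cover of the projective space. -/
abbrev sphType (d : ℕ) : Type :=
  ↥(Metric.sphere (0 : EuclideanSpace ℝ (Fin d)) 1)

/-- The projectivized skew product `P_A(ω,v) = (σ(ω), A(ω)v / ‖A(ω)v‖)` on
`Σ̂_κ × S^{d-1}`. -/
def projSkew {d κ : ℕ} (A : (ℤ → Fin κ) → Matrix.SpecialLinearGroup (Fin d) ℝ)
    (p : (ℤ → Fin κ) × sphType d) : (ℤ → Fin κ) × sphType d :=
  (shiftZ p.1,
    ⟨‖mvec (A p.1 : Matrix (Fin d) (Fin d) ℝ) (p.2 : EuclideanSpace ℝ (Fin d))‖⁻¹ •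
        mvec (A p.1 : Matrix (Fin d) (Fin d) ℝ) (p.2 : EuclideanSpace ℝ (Fin d)), by
      rw [mem_sphere_zero_iff_norm]
      refine norm_smul_inv_norm (mvec_ne_zero _ ?_)
      have hs := p.2.2
      rw [mem_sphere_zero_iff_norm] at hs
      intro h0
      rw [h0, norm_zero] at hs
      exact zero_ne_one hs⟩)

/-- The continuous observable `φ_A(ω,v) = log ‖A(ω)v‖` on `Σ̂_κ × S^{d-1}`. -/
def phiA {d κ : ℕ} (A : (ℤ → Fin κ) → Matrix.SpecialLinearGroup (Fin d) ℝ)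
    (p : (ℤ → Fin κ) × sphType d) : ℝ :=
  Real.log ‖mvec (A p.1 : Matrix (Fin d) (Fin d) ℝ) (p.2 : EuclideanSpace ℝ (Fin d))‖

section General

open scoped ENNReal

lemma continuous_birkhoffAverage {X : Type*} [TopologicalSpace X] {T : X → X} (hT : Continuous T)
    {f : X → ℝ} (hf : Continuous f) (n : ℕ) : Continuous (birkhoffAverage ℝ T f n) := by
  unfold birkhoffAverage birkhoffSum
  exact (continuous_finsetSum _ fun k _ => hf.comp (hT.iterate k)).const_smul ((n : ℝ)⁻¹)

variable {X Y : Type*} [MeasurableSpace X] [MeasurableSpace Y]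

/-- The average `n⁻¹ ∑_{k < n} (T^k)_* m` of the push-forwards of `m` along an orbit segment. -/
def orbitAverage (T : X → X) (m : Measure X) (n : ℕ) : Measure X :=
  (n : ℝ≥0∞)⁻¹ • ∑ k ∈ Finset.range n, m.map T^[k]

lemma map_orbitAverage_of_semiconj {T : X → X} {S : Y → Y} {π : X → Y} (hT : Measurable T)
    (hπ : Measurable π) (h : Function.Semiconj π T S) {ν : Measure Y}
    (hS : MeasurePreserving S ν ν) {m : Measure X} (hm : m.map π = ν) {n : ℕ} (hn : n ≠ 0) :
    (orbitAverage T m n).map π = ν := by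
  have key (k : ℕ) : (m.map T^[k]).map π = ν := by
    rw [Measure.map_map hπ (hT.iterate k), (h.iterate_right k).comp_eq,
      ← Measure.map_map (hS.measurable.iterate k) hπ, hm, (hS.iterate k).map_eq]
  rw [orbitAverage, Measure.map_smul, Measure.map_finset_sum hπ.aemeasurable]
  simp only [key, Finset.sum_const, Finset.card_range]
  rw [← Nat.cast_smul_eq_nsmul ℝ≥0∞, smul_smul, ENNReal.inv_mul_cancel (by simpa using hn)
    (ENNReal.natCast_ne_top n), one_smul]

lemma isProbabilityMeasure_orbitAverage {T : X → X} (hT : Measurable T) (m : Measure X)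
    [IsProbabilityMeasure m] {n : ℕ} (hn : n ≠ 0) : IsProbabilityMeasure (orbitAverage T m n) := by
  have key (k : ℕ) : m.map T^[k] Set.univ = 1 := by
    rw [Measure.map_apply (hT.iterate k) .univ]; simp
  constructor
  simp only [orbitAverage, Measure.smul_apply, Measure.finsetSum_apply, key]
  simp [ENNReal.inv_mul_cancel (show (n : ℝ≥0∞) ≠ 0 by simpa using hn)]

lemma integrable_of_continuous_of_compactSpace [TopologicalSpace X] [CompactSpace X]
    [OpensMeasurableSpace X] {f : X → ℝ} (hf : Continuous f) (m : Measure X)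
    [IsFiniteMeasure m] : Integrable f m :=
  hf.integrable_of_hasCompactSupport (HasCompactSupport.of_compactSpace f)

lemma integral_orbitAverage [TopologicalSpace X] [CompactSpace X] [BorelSpace X]
    {T : X → X} (hT : Continuous T) (m : Measure X) [IsProbabilityMeasure m] {f : X → ℝ}
    (hf : Continuous f) (n : ℕ) :
    ∫ x, f x ∂orbitAverage T m n = ∫ x, birkhoffAverage ℝ T f n x ∂m := by
  have hTk (k : ℕ) : IsProbabilityMeasure (m.map T^[k]) :=
    Measure.isProbabilityMeasure_map (hT.iterate k).measurable.aemeasurable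
  simp only [birkhoffAverage, birkhoffSum]
  rw [orbitAverage, integral_smul_measure, integral_finsetSum_measure fun k _ =>
    integrable_of_continuous_of_compactSpace hf _, integral_smul, integral_finsetSum (f := fun k x => f (T^[k] x)) _
    fun k _ => integrable_of_continuous_of_compactSpace (hf.comp (hT.iterate k)) _]
  congr 1
  · simp
  · refine Finset.sum_congr rfl fun k _ => ?_
    rw [integral_map (hT.iterate k).measurable.aemeasurable hf.aestronglyMeasurable]

lemma integral_birkhoffAverage [TopologicalSpace X] [CompactSpace X] [BorelSpace X]
    {T : X → X} (hT : Continuous T) {m : Measure X} [IsProbabilityMeasure m]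
    (hm : MeasurePreserving T m m) {f : X → ℝ} (hf : Continuous f) {n : ℕ} (hn : n ≠ 0) :
    ∫ x, birkhoffAverage ℝ T f n x ∂m = ∫ x, f x ∂m := by
  rw [← integral_orbitAverage hT m hf n]
  congr 1
  simpa using map_orbitAverage_of_semiconj hT.measurable measurable_id
    (Function.Semiconj.id_left (ga := T)) hm Measure.map_id hn

lemma ext_of_forall_integral_continuousMap [TopologicalSpace X] [BorelSpace X]
    [HasOuterApproxClosed X] {μ ν : Measure X} [IsFiniteMeasure μ]
    [IsFiniteMeasure ν] (h : ∀ f : C(X, ℝ), ∫ x, f x ∂μ = ∫ x, f x ∂ν) : μ = ν :=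
  ext_of_forall_integral_eq_of_IsFiniteMeasure fun f => h f.toContinuousMap

variable [TopologicalSpace X] [CompactSpace X] [BorelSpace X] [HasOuterApproxClosed X]

/-- A nonempty compact set of probability measures has an extreme point. -/
lemma exists_extreme_of_isCompact {K : Set (ProbabilityMeasure X)} (hK : IsCompact K)
    (hne : K.Nonempty) :
    ∃ μ ∈ K, ∀ μ₁ ∈ K, ∀ μ₂ ∈ K, ∀ a b : ℝ≥0∞, 0 < a → 0 < b → a + b = 1 →
      a • (μ₁ : Measure X) + b • (μ₂ : Measure X) = μ → μ₁ = μ := by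
  let F : ProbabilityMeasure X → C(X, ℝ) → ℝ := fun μ f => ∫ x, f x ∂μ
  have hF : Continuous F := continuous_pi fun f =>
    ProbabilityMeasure.continuous_integral_continuousMap f
  obtain ⟨_, ⟨μ, hμ, rfl⟩, hext⟩ := (hK.image hF).extremePoints_nonempty (hne.image F)
  refine ⟨μ, hμ, fun μ₁ h₁ μ₂ h₂ a b ha hb hab h => ?_⟩
  have ha' : a ≠ ∞ := ne_top_of_le_ne_top ENNReal.one_ne_top (hab ▸ le_self_add)
  have hb' : b ≠ ∞ := ne_top_of_le_ne_top ENNReal.one_ne_top (hab ▸ le_add_self)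
  have hseg : F μ ∈ openSegment ℝ (F μ₁) (F μ₂) := by
    refine ⟨a.toReal, b.toReal, ENNReal.toReal_pos ha.ne' ha', ENNReal.toReal_pos hb.ne' hb',
      ?_, ?_⟩
    · rw [← ENNReal.toReal_add ha' hb', hab, ENNReal.toReal_one]
    · ext f
      have i₁ := integrable_of_continuous_of_compactSpace f.continuous (μ₁ : Measure X)
      have i₂ := integrable_of_continuous_of_compactSpace f.continuous (μ₂ : Measure X)
      simp only [F, Pi.add_apply, Pi.smul_apply]
      rw [← h, integral_add_measure (i₁.smul_measure ha') (i₂.smul_measure hb'),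
        integral_smul_measure, integral_smul_measure]
  have hFF : F μ₁ = F μ := hext (Set.mem_image_of_mem F h₁) (Set.mem_image_of_mem F h₂) hseg
  exact ProbabilityMeasure.toMeasure_injective
    (ext_of_forall_integral_continuousMap fun f => congrFun hFF f)

variable [T2Space X]

/-- **Krylov–Bogolyubov**: orbit averages accumulate, along some ultrafilter, at an invariant
measure. -/
lemma exists_invariant_limit_orbitAverage {T : X → X} (hT : Continuous T)
    (m : ℕ → Measure X) [∀ n, IsProbabilityMeasure (m n)] :
    ∃ (U : Ultrafilter ℕ) (μ : ProbabilityMeasure X), (U : Filter ℕ) ≤ atTop ∧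
      MeasurePreserving T (μ : Measure X) μ ∧
      ∀ f : C(X, ℝ), Tendsto (fun n => ∫ x, f x ∂orbitAverage T (m n) (n + 1)) U
        (𝓝 (∫ x, f x ∂(μ : Measure X))) := by
  let p : ℕ → ProbabilityMeasure X := fun n =>
    ⟨orbitAverage T (m n) (n + 1),
      isProbabilityMeasure_orbitAverage hT.measurable (m n) n.succ_ne_zero⟩
  let U : Ultrafilter ℕ := hyperfilter ℕ
  have hU : (U : Filter ℕ) ≤ atTop := Nat.hyperfilter_le_atTop
  obtain ⟨μ, -, hμ⟩ := isCompact_univ.ultrafilter_le_nhds (U.map p) (by simp)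
  have hlim : ∀ f : C(X, ℝ), Tendsto (fun n => ∫ x, f x ∂orbitAverage T (m n) (n + 1)) U
      (𝓝 (∫ x, f x ∂(μ : Measure X))) := fun f =>
    ((ProbabilityMeasure.continuous_integral_continuousMap f).tendsto μ).comp hμ
  refine ⟨U, μ, hU, ⟨hT.measurable, ?_⟩, hlim⟩
  have : IsProbabilityMeasure ((μ : Measure X).map T) :=
    Measure.isProbabilityMeasure_map hT.measurable.aemeasurable
  refine ext_of_forall_integral_continuousMap fun f => ?_
  rw [integral_map hT.measurable.aemeasurable f.continuous.aestronglyMeasurable]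
  have hdiff := (hlim (f.comp ⟨T, hT⟩)).sub (hlim f)
  refine sub_eq_zero.1 (tendsto_nhds_unique hdiff ?_)
  have hbound (n : ℕ) : ‖∫ x, (f.comp ⟨T, hT⟩) x ∂orbitAverage T (m n) (n + 1) -
      ∫ x, f x ∂orbitAverage T (m n) (n + 1)‖ ≤ 2 * ‖f‖ * (1 / ((n : ℝ) + 1)) := by
    have hfT : Continuous (f.comp ⟨T, hT⟩) := (f.comp ⟨T, hT⟩).continuous
    rw [integral_orbitAverage hT _ hfT, integral_orbitAverage hT _ f.continuous, ← integral_sub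
      (integrable_of_continuous_of_compactSpace (continuous_birkhoffAverage hT hfT _) _)
      (integrable_of_continuous_of_compactSpace (continuous_birkhoffAverage hT f.continuous _) _)]
    refine (norm_integral_le_of_norm_le_const (C := 2 * ‖f‖ * (1 / ((n : ℝ) + 1)))
      (ae_of_all _ fun x => ?_)).trans_eq (by simp)
    have hcomp : birkhoffAverage ℝ T (f.comp ⟨T, hT⟩) (n + 1) x =
        birkhoffAverage ℝ T f (n + 1) (T x) := by
      simp only [birkhoffAverage, birkhoffSum, ContinuousMap.comp_apply, ContinuousMap.coe_mk,
        ← Function.iterate_succ_apply', Function.iterate_succ_apply]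
    rw [hcomp, birkhoffAverage_apply_sub_birkhoffAverage, norm_smul, mul_comm]
    have h2 : ‖f (T^[n + 1] x) - f x‖ ≤ 2 * ‖f‖ :=
      (norm_sub_le _ _).trans (by linarith [f.norm_coe_le_norm (T^[n + 1] x), f.norm_coe_le_norm x])
    refine mul_le_mul h2 (le_of_eq ?_) (norm_nonneg _) (by positivity)
    rw [norm_inv, one_div, Real.norm_of_nonneg (by positivity)]
    push_cast
    rfl
  refine squeeze_zero_norm hbound ?_
  simpa using (tendsto_one_div_add_atTop_nhds_zero_nat (𝕜 := ℝ)).mono_left hU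
    |>.const_mul (2 * ‖f‖)

/-- Ergodic lifts of an ergodic factor measure that maximize a continuous observable exist as
soon as the maximal value is approached by Birkhoff averages along arbitrary lifts. -/
theorem exists_ergodic_lift_integral_eq [TopologicalSpace Y] [T2Space Y] [BorelSpace Y]
    [HasOuterApproxClosed Y] {T : X → X} {S : Y → Y} {π : X → Y}
    (hT : Continuous T) (hπ : Continuous π) (h : Function.Semiconj π T S)
    {ν : Measure Y} [IsProbabilityMeasure ν] (hν : Ergodic S ν) (φ : C(X, ℝ)) {c : ℝ}
    (hle : ∀ μ : Measure X, IsProbabilityMeasure μ → MeasurePreserving T μ μ → μ.map π = ν →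
      ∫ x, φ x ∂μ ≤ c)
    (m : ℕ → Measure X) (hmπ : ∀ n, (m n).map π = ν)
    (hm : Tendsto (fun n => ∫ x, birkhoffAverage ℝ T φ (n + 1) x ∂m n) atTop (𝓝 c)) :
    ∃ μ : Measure X, IsProbabilityMeasure μ ∧ Ergodic T μ ∧ μ.map π = ν ∧ ∫ x, φ x ∂μ = c := by
  have hprob (n : ℕ) : IsProbabilityMeasure (m n) := by
    constructor
    rw [← Set.preimage_univ (f := π), ← Measure.map_apply hπ.measurable .univ, hmπ n, measure_univ]
  let ν' : ProbabilityMeasure Y := ⟨ν, inferInstance⟩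
  let K : Set (ProbabilityMeasure X) := {μ | MeasurePreserving T (μ : Measure X) μ ∧
    (μ : Measure X).map π = ν ∧ ∫ x, φ x ∂(μ : Measure X) = c}
  have hKclosed : IsClosed K := by
    refine IsClosed.inter ?_ (IsClosed.inter ?_ ?_)
    · refine (congrArg IsClosed (Set.ext fun μ => ?_)).mp
        (isClosed_eq (ProbabilityMeasure.continuous_map hT) continuous_id)
      exact Iff.symm ⟨fun hμ => Subtype.ext hμ.map_eq, fun hμ => ⟨hT.measurable, congrArg Subtype.val hμ⟩⟩
    · refine (congrArg IsClosed (Set.ext fun μ => ?_)).mp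
        (isClosed_eq (ProbabilityMeasure.continuous_map hπ)
          (continuous_const (y := ν')))
      exact Iff.symm ⟨fun hμ => Subtype.ext hμ, fun hμ => congrArg Subtype.val hμ⟩
    · exact isClosed_eq (ProbabilityMeasure.continuous_integral_continuousMap φ) continuous_const
  have hKne : K.Nonempty := by
    obtain ⟨U, μ, hU, hinv, hlim⟩ := exists_invariant_limit_orbitAverage hT m
    have : IsProbabilityMeasure ((μ : Measure X).map π) :=
      Measure.isProbabilityMeasure_map hπ.measurable.aemeasurable
    refine ⟨μ, hinv, ext_of_forall_integral_eq_of_IsFiniteMeasure fun f => ?_, ?_⟩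
    · rw [integral_map hπ.measurable.aemeasurable f.continuous.aestronglyMeasurable]
      refine tendsto_nhds_unique (hlim (f.toContinuousMap.comp ⟨π, hπ⟩)) ?_
      refine (tendsto_congr fun n => ?_).2 tendsto_const_nhds
      rw [← map_orbitAverage_of_semiconj hT.measurable hπ.measurable h hν.toMeasurePreserving
        (hmπ n) n.succ_ne_zero,
        integral_map hπ.measurable.aemeasurable f.continuous.aestronglyMeasurable]
      rfl
    · refine tendsto_nhds_unique (hlim φ) ?_
      simpa only [integral_orbitAverage hT _ φ.continuous] using hm.mono_left hU
  obtain ⟨μ, ⟨hμT, hμπ, hμφ⟩, hext⟩ := exists_extreme_of_isCompact hKclosed.isCompact hKne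
  refine ⟨μ, inferInstance, Ergodic.of_mem_extremePoints ?_, hμπ, hμφ⟩
  rw [mem_extremePoints_iff_left]
  refine ⟨⟨hμT, inferInstance⟩, ?_⟩
  rintro μ₁ ⟨hT₁, hp₁⟩ μ₂ ⟨hT₂, hp₂⟩ ⟨a, b, ha, hb, hab, hsum⟩
  have hproj {ρ : Measure X} (hρ : IsProbabilityMeasure ρ) (hρT : MeasurePreserving T ρ ρ)
      (hac : ρ ≪ μ) : ρ.map π = ν := by
    have := Measure.isProbabilityMeasure_map (μ := ρ) hπ.measurable.aemeasurable
    refine hν.eq_of_absolutelyContinuous ⟨hν.measurable, ?_⟩ (hμπ ▸ hac.map hπ.measurable)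
    rw [Measure.map_map hν.measurable hπ.measurable, ← h.comp_eq,
      ← Measure.map_map hπ.measurable hT.measurable, hρT.map_eq]
  have hac₁ : μ₁ ≪ μ :=
    hsum ▸ (Measure.absolutelyContinuous_smul ha.ne').trans (.add_right .rfl _)
  have hac₂ : μ₂ ≪ μ := by
    rw [← hsum, add_comm]
    exact (Measure.absolutelyContinuous_smul hb.ne').trans (.add_right .rfl _)
  have hπ₁ := hproj hp₁ hT₁ hac₁
  have hπ₂ := hproj hp₂ hT₂ hac₂
  have hle₁ := hle μ₁ hp₁ hT₁ hπ₁
  have hle₂ := hle μ₂ hp₂ hT₂ hπ₂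
  have ha' : a ≠ ∞ := ne_top_of_le_ne_top ENNReal.one_ne_top (hab ▸ le_self_add)
  have hb' : b ≠ ∞ := ne_top_of_le_ne_top ENNReal.one_ne_top (hab ▸ le_add_self)
  have hint : a.toReal * ∫ x, φ x ∂μ₁ + b.toReal * ∫ x, φ x ∂μ₂ = c := by
    have i₁ := integrable_of_continuous_of_compactSpace φ.continuous μ₁
    have i₂ := integrable_of_continuous_of_compactSpace φ.continuous μ₂
    rw [← hμφ, ← hsum, integral_add_measure (i₁.smul_measure ha') (i₂.smul_measure hb'),
      integral_smul_measure, integral_smul_measure, smul_eq_mul, smul_eq_mul]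
  have hab' : a.toReal + b.toReal = 1 := by
    rw [← ENNReal.toReal_add ha' hb', hab, ENNReal.toReal_one]
  have hdef : a.toReal * (c - ∫ x, φ x ∂μ₁) + b.toReal * (c - ∫ x, φ x ∂μ₂) = 0 := by
    linear_combination c * hab' - hint
  have hdef' := (add_eq_zero_iff_of_nonneg
    (mul_nonneg a.toReal_nonneg (sub_nonneg.2 hle₁))
    (mul_nonneg b.toReal_nonneg (sub_nonneg.2 hle₂))).1 hdef
  have heq₁ : ∫ x, φ x ∂μ₁ = c :=
    (sub_eq_zero.1 ((mul_eq_zero_iff_left (ENNReal.toReal_pos ha.ne' ha').ne').1 hdef'.1)).symm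
  have heq₂ : ∫ x, φ x ∂μ₂ = c :=
    (sub_eq_zero.1 ((mul_eq_zero_iff_left (ENNReal.toReal_pos hb.ne' hb').ne').1 hdef'.2)).symm
  exact congrArg Subtype.val (hext ⟨μ₁, hp₁⟩ ⟨hT₁, hπ₁, heq₁⟩ ⟨μ₂, hp₂⟩ ⟨hT₂, hπ₂, heq₂⟩
    a b ha hb hab hsum)

end General

section Cocycle

variable {d κ : ℕ}

lemma mvec_eq_toEuclideanCLM (B : Matrix (Fin d) (Fin d) ℝ) (v : EuclideanSpace ℝ (Fin d)) :
    mvec B v = Matrix.toEuclideanCLM (𝕜 := ℝ) B v :=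
  rfl

lemma mvec_smul (B : Matrix (Fin d) (Fin d) ℝ) (c : ℝ) (v : EuclideanSpace ℝ (Fin d)) :
    mvec B (c • v) = c • mvec B v :=
  map_smul (Matrix.toEuclideanLin B) c v

lemma mvec_mul (B C : Matrix (Fin d) (Fin d) ℝ) (v : EuclideanSpace ℝ (Fin d)) :
    mvec (B * C) v = mvec B (mvec C v) := by
  simp [mvec_eq_toEuclideanCLM, map_mul]

lemma sphType_ne_zero (v : sphType d) : (v : EuclideanSpace ℝ (Fin d)) ≠ 0 :=
  ne_zero_of_mem_unit_sphere v

lemma continuous_toEuclideanCLM : Continuous fun B : Matrix (Fin d) (Fin d) ℝ =>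
    Matrix.toEuclideanCLM (𝕜 := ℝ) B :=
  LinearMap.continuous_of_finiteDimensional
    (Matrix.toEuclideanCLM (n := Fin d) (𝕜 := ℝ)).toAlgEquiv.toLinearMap

lemma norm_mvec_le (B : Matrix (Fin d) (Fin d) ℝ) (v : sphType d) :
    ‖mvec B v‖ ≤ ‖Matrix.toEuclideanCLM (𝕜 := ℝ) B‖ := by
  simpa [mvec_eq_toEuclideanCLM] using (Matrix.toEuclideanCLM (𝕜 := ℝ) B).le_opNorm v

/-- The `i`-th standard basis vector as a point of the unit sphere. -/
def basisSphere (i : Fin d) : sphType d :=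
  ⟨EuclideanSpace.single i 1, by simp⟩

lemma exists_norm_le_mul_norm_basisSphere (hd : 0 < d) (B : Matrix (Fin d) (Fin d) ℝ) :
    ∃ i : Fin d, ‖Matrix.toEuclideanCLM (𝕜 := ℝ) B‖ ≤ d * ‖mvec B (basisSphere i)‖ := by
  have : Nonempty (Fin d) := ⟨⟨0, hd⟩⟩
  obtain ⟨i, hi⟩ := Finite.exists_max fun i : Fin d => ‖mvec B (basisSphere i)‖
  refine ⟨i, ContinuousLinearMap.opNorm_le_bound _ (by positivity) fun v => ?_⟩
  have hv : v = ∑ j, v j • (basisSphere j : EuclideanSpace ℝ (Fin d)) := by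
    simpa [basisSphere] using ((EuclideanSpace.basisFun (Fin d) ℝ).sum_repr v).symm
  calc ‖Matrix.toEuclideanCLM (𝕜 := ℝ) B v‖
      = ‖∑ j, v j • mvec B (basisSphere j)‖ := by
        conv_lhs => rw [hv, map_sum]
        simp only [map_smul, mvec_eq_toEuclideanCLM]
    _ ≤ ∑ j, ‖v j • mvec B (basisSphere j)‖ := norm_sum_le _ _
    _ ≤ ∑ _j : Fin d, ‖v‖ * ‖mvec B (basisSphere i)‖ := by
        refine Finset.sum_le_sum fun j _ => ?_
        rw [norm_smul]
        exact mul_le_mul (PiLp.norm_apply_le v j) (hi j) (norm_nonneg _) (norm_nonneg _)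
    _ = d * ‖mvec B (basisSphere i)‖ * ‖v‖ := by
        simp only [Finset.sum_const, Finset.card_univ, Fintype.card_fin, nsmul_eq_mul]
        ring

/-- A finite measurable family of sets covering the space has a measurable selector. -/
lemma exists_measurable_selector {Ω : Type*} [MeasurableSpace Ω] {p : Ω → Fin d → Prop}
    (hp : ∀ x, ∃ i, p x i) (hm : ∀ i, MeasurableSet {x | p x i}) :
    ∃ s : Ω → Fin d, Measurable s ∧ ∀ x, p x (s x) := by
  classical
  let q : Ω → ℕ → Prop := fun x k => ∃ h : k < d, p x ⟨k, h⟩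
  have hq (x : Ω) : ∃ k, q x k := let ⟨i, hi⟩ := hp x; ⟨i, i.2, hi⟩
  have hqm (k : ℕ) : MeasurableSet {x | q x k} := by
    by_cases h : k < d
    · simpa [q, h] using hm ⟨k, h⟩
    · simp [q, h]
  have hfind := measurable_find hq hqm
  refine ⟨fun x => ⟨Nat.find (hq x), (Nat.find_spec (hq x)).1⟩, ?_,
    fun x => (Nat.find_spec (hq x)).2⟩
  refine measurable_to_countable' fun i => ?_
  convert hfind (measurableSet_singleton (i : ℕ)) using 1
  ext x
  simp [Fin.ext_iff]

lemma continuous_shiftZ : Continuous (shiftZ : (ℤ → Fin κ) → ℤ → Fin κ) :=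
  continuous_pi fun n => continuous_apply (n + 1)

variable {A : (ℤ → Fin κ) → Matrix.SpecialLinearGroup (Fin d) ℝ}

lemma semiconj_fst_projSkew : Function.Semiconj Prod.fst (projSkew A) shiftZ :=
  fun _ => rfl

lemma continuous_cocycleProdZ (hA : Continuous fun ω => (A ω : Matrix (Fin d) (Fin d) ℝ))
    (n : ℕ) : Continuous fun ω => (cocycleProdZ A ω n : Matrix (Fin d) (Fin d) ℝ) := by
  induction n with
  | zero => exact continuous_const
  | succ n ih =>
    simp only [cocycleProdZ, Matrix.SpecialLinearGroup.coe_mul]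
    exact (hA.comp (continuous_shiftZ.iterate n)).matrix_mul ih

lemma continuous_mvec {Ω : Type*} [TopologicalSpace Ω] {B : Ω → Matrix (Fin d) (Fin d) ℝ}
    {v : Ω → EuclideanSpace ℝ (Fin d)} (hB : Continuous B) (hv : Continuous v) :
    Continuous fun x => mvec (B x) (v x) :=
  (continuous_toEuclideanCLM.comp hB).clm_apply hv

lemma continuous_projSkew (hA : Continuous fun ω => (A ω : Matrix (Fin d) (Fin d) ℝ)) :
    Continuous (projSkew A) := by
  have h := continuous_mvec (hA.comp continuous_fst)
    (continuous_subtype_val.comp (continuous_snd (X := ℤ → Fin κ) (Y := sphType d)))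
  exact (continuous_shiftZ.comp continuous_fst).prodMk (Continuous.subtype_mk
    ((h.norm.inv₀ fun p => norm_ne_zero_iff.2 (mvec_ne_zero _ (sphType_ne_zero p.2))).smul h) _)

lemma continuous_phiA (hA : Continuous fun ω => (A ω : Matrix (Fin d) (Fin d) ℝ)) :
    Continuous (phiA A) :=
  (continuous_mvec (hA.comp continuous_fst) (continuous_subtype_val.comp continuous_snd)).norm.log
    fun p => norm_ne_zero_iff.2 (mvec_ne_zero _ (sphType_ne_zero p.2))

lemma norm_toEuclideanCLM_pos (hd : 0 < d) (B : Matrix.SpecialLinearGroup (Fin d) ℝ) :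
    0 < ‖Matrix.toEuclideanCLM (𝕜 := ℝ) (B : Matrix (Fin d) (Fin d) ℝ)‖ :=
  (norm_pos_iff.2 (mvec_ne_zero B (sphType_ne_zero (basisSphere ⟨0, hd⟩)))).trans_le
    (norm_mvec_le _ _)

lemma continuous_log_norm_cocycleProdZ (hd : 0 < d)
    (hA : Continuous fun ω => (A ω : Matrix (Fin d) (Fin d) ℝ)) (n : ℕ) :
    Continuous fun ω => Real.log
      ‖Matrix.toEuclideanCLM (𝕜 := ℝ) (cocycleProdZ A ω n : Matrix (Fin d) (Fin d) ℝ)‖ :=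
  (continuous_toEuclideanCLM.comp (continuous_cocycleProdZ hA n)).norm.log
    fun _ => (norm_toEuclideanCLM_pos hd _).ne'

lemma projSkew_iterate_fst (n : ℕ) (p : (ℤ → Fin κ) × sphType d) :
    ((projSkew A)^[n] p).1 = shiftZ^[n] p.1 :=
  semiconj_fst_projSkew.iterate_right n p

lemma projSkew_iterate_snd (n : ℕ) (p : (ℤ → Fin κ) × sphType d) :
    (((projSkew A)^[n] p).2 : EuclideanSpace ℝ (Fin d)) =
      ‖mvec (cocycleProdZ A p.1 n : Matrix (Fin d) (Fin d) ℝ) p.2‖⁻¹ •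
        mvec (cocycleProdZ A p.1 n : Matrix (Fin d) (Fin d) ℝ) p.2 := by
  induction n with
  | zero => simp [cocycleProdZ, mvec_eq_toEuclideanCLM]
  | succ n ih =>
    have hw := norm_ne_zero_iff.2
      (mvec_ne_zero (cocycleProdZ A p.1 n) (sphType_ne_zero p.2))
    rw [Function.iterate_succ_apply', projSkew]
    simp only [ih, projSkew_iterate_fst, cocycleProdZ, Matrix.SpecialLinearGroup.coe_mul, mvec_mul,
      mvec_smul, norm_smul, norm_inv, norm_norm, mul_inv, inv_inv, smul_smul]
    congr 1
    field_simp

lemma birkhoffSum_projSkew_phiA (n : ℕ) (p : (ℤ → Fin κ) × sphType d) :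
    birkhoffSum (projSkew A) (phiA A) n p =
      Real.log ‖mvec (cocycleProdZ A p.1 n : Matrix (Fin d) (Fin d) ℝ) p.2‖ := by
  induction n with
  | zero => simp [cocycleProdZ, mvec_eq_toEuclideanCLM]
  | succ n ih =>
    have hw := mvec_ne_zero (cocycleProdZ A p.1 n) (sphType_ne_zero p.2)
    rw [birkhoffSum_succ, ih, phiA, projSkew_iterate_fst, projSkew_iterate_snd, mvec_smul,
      norm_smul, norm_inv, norm_norm, Real.log_mul (inv_ne_zero (norm_ne_zero_iff.2 hw))
        (norm_ne_zero_iff.2 (mvec_ne_zero _ hw)), Real.log_inv, cocycleProdZ,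
      Matrix.SpecialLinearGroup.coe_mul, mvec_mul]
    ring

lemma birkhoffAverage_projSkew_phiA_le (n : ℕ) (p : (ℤ → Fin κ) × sphType d) :
    birkhoffAverage ℝ (projSkew A) (phiA A) n p ≤ (n : ℝ)⁻¹ * Real.log
      ‖Matrix.toEuclideanCLM (𝕜 := ℝ) (cocycleProdZ A p.1 n : Matrix (Fin d) (Fin d) ℝ)‖ := by
  rw [birkhoffAverage, birkhoffSum_projSkew_phiA, smul_eq_mul]
  refine mul_le_mul_of_nonneg_left (Real.log_le_log ?_ (norm_mvec_le _ _)) (by positivity)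
  exact norm_pos_iff.2 (mvec_ne_zero _ (sphType_ne_zero p.2))

/-- Up to the bounded error `log d`, the growth of the cocycle is realized by a measurable choice
of unit vectors. -/
lemma exists_measurable_almost_maximizing (hd : 0 < d)
    (hA : Continuous fun ω => (A ω : Matrix (Fin d) (Fin d) ℝ)) (n : ℕ) :
    ∃ v : (ℤ → Fin κ) → sphType d, Measurable v ∧ ∀ ω,
      (n : ℝ)⁻¹ * Real.log
        ‖Matrix.toEuclideanCLM (𝕜 := ℝ) (cocycleProdZ A ω n : Matrix (Fin d) (Fin d) ℝ)‖ -
          (n : ℝ)⁻¹ * Real.log d ≤ birkhoffAverage ℝ (projSkew A) (phiA A) n (ω, v ω) := by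
  have hcont := continuous_cocycleProdZ hA n
  obtain ⟨s, hs, hsle⟩ := exists_measurable_selector
    (fun ω => exists_norm_le_mul_norm_basisSphere hd (cocycleProdZ A ω n).1)
    fun i => (isClosed_le (continuous_toEuclideanCLM.comp hcont).norm
      (continuous_const.mul (continuous_mvec hcont continuous_const).norm)).measurableSet
  refine ⟨fun ω => basisSphere (s ω), (measurable_of_countable basisSphere).comp hs, fun ω => ?_⟩
  rw [birkhoffAverage, birkhoffSum_projSkew_phiA, smul_eq_mul, ← mul_sub]
  refine mul_le_mul_of_nonneg_left ?_ (by positivity)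
  rw [sub_le_iff_le_add', ← Real.log_mul (by exact_mod_cast hd.ne')
    (norm_ne_zero_iff.2 (mvec_ne_zero _ (sphType_ne_zero _)))]
  exact Real.log_le_log (norm_toEuclideanCLM_pos hd _) (hsle ω)

end Cocycle

/-- **Ergodic lifts realizing the top Lyapunov exponent.** Let `A : Σ̂_κ → SL(d,ℝ)` be a
continuous cocycle over the two-sided shift and let `ν` be a shift-invariant ergodic
probability measure whose top Lyapunov exponent `λ = lim (1/n) ∫ log ‖A⁽ⁿ⁾(ω)‖ dν` exists
(operator norm on `ℝ^d`). Then there is an ergodic invariant probability measure `μ` for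
the projectivized skew product `P_A` on `Σ̂_κ × S^{d-1}` projecting to `ν` on the first
coordinate and satisfying `∫ φ_A dμ = λ`. -/
theorem exists_ergodic_lift_top_lyapunov (d κ : ℕ) (hd : 2 ≤ d) (hκ : 1 ≤ κ)
    (A : (ℤ → Fin κ) → Matrix.SpecialLinearGroup (Fin d) ℝ)
    (hA : Continuous fun ω => (A ω : Matrix (Fin d) (Fin d) ℝ))
    (ν : Measure (ℤ → Fin κ)) [IsProbabilityMeasure ν]
    (hν : Ergodic shiftZ ν)
    (lam : ℝ)
    (hlim : Tendsto (fun n : ℕ => (n : ℝ)⁻¹ *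
        ∫ ω, Real.log
          ‖Matrix.toEuclideanCLM (𝕜 := ℝ) (cocycleProdZ A ω n : Matrix (Fin d) (Fin d) ℝ)‖ ∂ν)
      atTop (nhds lam)) :
    ∃ μ : Measure ((ℤ → Fin κ) × sphType d), IsProbabilityMeasure μ ∧
      Ergodic (projSkew A) μ ∧ μ.map Prod.fst = ν ∧ ∫ p, phiA A p ∂μ = lam := by
  have hd0 : 0 < d := by omega
  let φ : C((ℤ → Fin κ) × sphType d, ℝ) := ⟨phiA A, continuous_phiA hA⟩
  have hT := continuous_projSkew hA
  have hL := continuous_log_norm_cocycleProdZ hd0 hA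
  have hlim' := hlim.comp (tendsto_add_atTop_nat 1)
  choose v hv hvle using fun n => exists_measurable_almost_maximizing hd0 hA (n + 1)
  have hgraph (n : ℕ) : Measurable fun ω => (ω, v n ω) := measurable_id.prodMk (hv n)
  refine exists_ergodic_lift_integral_eq hT continuous_fst semiconj_fst_projSkew hν φ
    (fun μ hμ hμT hμπ => ?_) (fun n => ν.map fun ω => (ω, v n ω)) (fun n => ?_) ?_
  · refine ge_of_tendsto' hlim' fun n => ?_
    rw [← integral_birkhoffAverage hT hμT φ.continuous n.succ_ne_zero]
    simp only [Function.comp_apply]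
    rw [← hμπ, integral_map measurable_fst.aemeasurable (hL _).aestronglyMeasurable,
      ← integral_const_mul]
    exact integral_mono
      (integrable_of_continuous_of_compactSpace (continuous_birkhoffAverage hT φ.continuous _) _)
      (integrable_of_continuous_of_compactSpace (((hL _).comp continuous_fst).const_mul _) _)
      (birkhoffAverage_projSkew_phiA_le (n + 1))
  · rw [Measure.map_map measurable_fst (hgraph n)]
    exact Measure.map_id
  · have hzero : Tendsto (fun n : ℕ => ((n + 1 : ℕ) : ℝ)⁻¹ * Real.log d) atTop (𝓝 0) := by
      simpa using (tendsto_inv_atTop_nhds_zero_nat (𝕜 := ℝ)).comp (tendsto_add_atTop_nat 1)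
        |>.mul_const (Real.log d)
    have hint (n : ℕ) : Integrable (fun ω => ((n + 1 : ℕ) : ℝ)⁻¹ * Real.log ‖Matrix.toEuclideanCLM
        (𝕜 := ℝ) (cocycleProdZ A ω (n + 1) : Matrix (Fin d) (Fin d) ℝ)‖) ν :=
      integrable_of_continuous_of_compactSpace ((hL _).const_mul _) _
    have hbirk (n : ℕ) : Continuous (birkhoffAverage ℝ (projSkew A) φ (n + 1)) :=
      continuous_birkhoffAverage hT φ.continuous _
    have hintb (n : ℕ) : Integrable
        (fun ω => birkhoffAverage ℝ (projSkew A) φ (n + 1) (ω, v n ω)) ν := by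
      have := Measure.isProbabilityMeasure_map (μ := ν) (hgraph n).aemeasurable
      exact (integrable_of_continuous_of_compactSpace (hbirk n)
        (ν.map fun ω => (ω, v n ω))).comp_measurable (hgraph n)
    have hmap (n : ℕ) : ∫ p, birkhoffAverage ℝ (projSkew A) φ (n + 1) p
        ∂ν.map (fun ω => (ω, v n ω)) =
          ∫ ω, birkhoffAverage ℝ (projSkew A) φ (n + 1) (ω, v n ω) ∂ν :=
      integral_map (hgraph n).aemeasurable (hbirk n).aestronglyMeasurable
    have hlow := hlim'.sub hzero
    rw [sub_zero] at hlow
    refine tendsto_of_tendsto_of_tendsto_of_le_of_le hlow hlim' (fun n => ?_) fun n => ?_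
    · simp only [hmap, Function.comp_apply]
      rw [← integral_const_mul]
      calc _ = ∫ ω, (((n + 1 : ℕ) : ℝ)⁻¹ * Real.log ‖Matrix.toEuclideanCLM
              (𝕜 := ℝ) (cocycleProdZ A ω (n + 1) : Matrix (Fin d) (Fin d) ℝ)‖ -
                ((n + 1 : ℕ) : ℝ)⁻¹ * Real.log d) ∂ν := by
            rw [integral_sub (hint n) (integrable_const _)]
            simp
        _ ≤ _ := integral_mono ((hint n).sub (integrable_const _)) (hintb n) (hvle n)
    · simp only [hmap, Function.comp_apply]
      rw [← integral_const_mul]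
      exact integral_mono (hintb n) (hint n)
        fun ω => birkhoffAverage_projSkew_phiA_le (n + 1) (ω, v n ω)

end
end

section
/- Let 𝕋² = (ℝ/ℤ) × (ℝ/ℤ) be the two-dimensional torus with its product metric, and let f_A : 𝕋² → 𝕋² be the hyperbolic automorphism induced by the matrix A = [[2,1],[1,1]], i.e. f_A(x,y) = (2x + y, x + y) (mod ℤ²). Then f_A does not have frequent hitting times: there exists ε > 0 such that for every K ∈ ℕ there are points x₁, x₂ ∈ 𝕋² and a radius r with 0 < r ≤ ε/2 such that for every 0 ≤ p ≤ K there is no point z with the ball B(z, r/2) contained in f_A^p(B(x₁,ε)) ∩ B(x₂,r). -/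
open Metric

noncomputable section

/-- The two-dimensional torus `𝕋² = (ℝ/ℤ) × (ℝ/ℤ)` with its product metric. -/
abbrev Torus2 : Type := AddCircle (1 : ℝ) × AddCircle (1 : ℝ)

/-- The hyperbolic automorphism of `𝕋²` induced by the matrix `[[2,1],[1,1]]`:
`f_A(x,y) = (2x + y, x + y) (mod ℤ²)`. -/
def catMap (p : Torus2) : Torus2 :=
  (p.1 + p.1 + p.2, p.1 + p.2)

/-- The inverse of the cat map expands the norm by a factor of at most `3`. -/
theorem norm_le_three_mul_norm_catMap (q : Torus2) : ‖q‖ ≤ 3 * ‖catMap q‖ := by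
  have h1 : q.1 = (catMap q).1 - (catMap q).2 := by simp only [catMap]; abel
  have h2 : q.2 = (catMap q).2 + (catMap q).2 - (catMap q).1 := by simp only [catMap]; abel
  have hfst := norm_fst_le (catMap q)
  have hsnd := norm_snd_le (catMap q)
  refine norm_prod_le_iff.2 ⟨?_, ?_⟩
  · rw [h1]
    linarith [norm_sub_le (catMap q).1 (catMap q).2, norm_nonneg (catMap q)]
  · rw [h2]
    linarith [norm_sub_le ((catMap q).2 + (catMap q).2) (catMap q).1,
      norm_add_le (catMap q).2 (catMap q).2]

theorem norm_le_three_pow_mul_norm_iterate_catMap (p : ℕ) (q : Torus2) :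
    ‖q‖ ≤ 3 ^ p * ‖catMap^[p] q‖ := by
  induction p generalizing q with
  | zero => simp
  | succ n ih =>
    rw [Function.iterate_succ_apply, pow_succ']
    linarith [norm_le_three_mul_norm_catMap q, ih (catMap q)]

/-- **The hyperbolic toral automorphism does not have frequent hitting times.**
There exists `ε > 0` such that for every candidate constant `K` there are points
`x₁, x₂ ∈ 𝕋²` and a radius `0 < r ≤ ε/2` such that for no `0 ≤ p ≤ K` does there exist a
point `z` with `B(z, r/2) ⊆ f_A^p(B(x₁,ε)) ∩ B(x₂,r)`. -/
theorem catMap_not_frequentHittingTimes :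
    ∃ ε : ℝ, 0 < ε ∧ ∀ K : ℕ, ∃ x₁ x₂ : Torus2, ∃ r : ℝ,
      0 < r ∧ r ≤ ε / 2 ∧ ∀ p ≤ K,
        ¬ ∃ z : Torus2,
          Metric.ball z (r / 2) ⊆ catMap^[p] '' Metric.ball x₁ ε ∩ Metric.ball x₂ r := by
  have hhalf : ‖(((1 / 2 : ℝ) : AddCircle (1 : ℝ)))‖ = 1 / 2 := by
    simpa using AddCircle.norm_half_period_eq (1 : ℝ)
  refine ⟨1 / 4, by norm_num, fun K ↦ ⟨(((1 / 2 : ℝ) : AddCircle (1 : ℝ)), 0), 0,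
    1 / 8 / 3 ^ K, by positivity, ?_, ?_⟩⟩
  · rw [div_le_iff₀ (by positivity)]
    linarith [one_le_pow₀ (M₀ := ℝ) (a := 3) (by norm_num) (n := K)]
  · rintro p hp ⟨z, hz⟩
    obtain ⟨⟨y, hy, rfl⟩, hz0⟩ := hz (mem_ball_self (by positivity))
    rw [mem_ball_zero_iff, lt_div_iff₀ (by positivity)] at hz0
    have hpow : (3 : ℝ) ^ p ≤ 3 ^ K := pow_le_pow_right₀ (by norm_num) hp
    have hsmall : ‖y‖ < 1 / 8 := by
      nlinarith [norm_le_three_pow_mul_norm_iterate_catMap p y, norm_nonneg (catMap^[p] y)]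
    rw [mem_ball, dist_eq_norm] at hy
    have hfst := (norm_fst_le _).trans_lt hy
    have hdiff := norm_sub_norm_le ((1 / 2 : ℝ) : AddCircle (1 : ℝ)) y.1
    rw [norm_sub_rev] at hdiff
    simp only [Prod.fst_sub] at hfst
    linarith [norm_fst_le y]

end
end
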